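/- arXiv:0809.0033 — 2 statements merged into one kernel-verified Lean document; each statement's English description precedes it below -/
import Mathlib

section
/- Let f : M(p,ℂ) → ℂ be a linear function on p×p complex matrices, f(M) = Σ_{i,j} a_{ij} m_{ij}, which is not a trace multiple (i.e., it is not the case that a_{ij} = 0 for all i ≠ j and all diagonal coefficients a_{ii} are equal). Let X ∈ SU(p) be a non-central matrix. Then f is not constant on the conjugacy class {U X U⁻¹ : U ∈ SU(p)}. -/
/-!
For an orthogonal projection `P` and a phase `z`, conjugating `X` by the unitary `(1 - P) + z P`
multiplies the corner `P X (1 - P)` by `z`, the opposite corner by `z⁻¹`, and fixes the rest. A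
linear map that is constant on the unitary orbit of `X` therefore vanishes on the whole unitary
orbit of that corner. A non-scalar `X` has a unitary conjugate with a nonzero `(i, j)` entry, and
cutting that conjugate twice isolates the entry, so `M ↦ tr (B M)` would vanish on the orbit of the
matrix unit `E i j`. Then the `(j, i)` entry of every unitary conjugate of `B` is zero, which makes
`B` scalar.
-/

open Matrix

section StarAlgebra

variable {A : Type*} [Ring A] [StarRing A]

theorem one_sub_add_smul_mem_unitary {R : Type*} [CommRing R] [StarRing R] [Algebra R A]
    [StarModule R A] {P : A} (hP : IsStarProjection P) {z : R} (hz : z ∈ unitary R) :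
    1 - P + z • P ∈ unitary A := by
  have hQ : IsStarProjection (1 - P) := hP.one_sub
  simp only [Unitary.mem_iff, star_add, star_smul, hP.isSelfAdjoint.star_eq,
    hQ.isSelfAdjoint.star_eq, mul_add, add_mul, smul_mul_assoc, mul_smul_comm, smul_smul,
    hP.isIdempotentElem.eq, hQ.isIdempotentElem.eq, hP.mul_one_sub_self, hP.one_sub_mul_self,
    smul_zero, add_zero, zero_add, Unitary.star_mul_self_of_mem hz,
    Unitary.mul_star_self_of_mem hz, one_smul, sub_add_cancel, and_self]

variable [Algebra ℂ A] [StarModule ℂ A] {E : Type*} [AddCommGroup E] [Module ℂ E]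

theorem eq_zero_of_forall_unitary_add_smul_add_star_smul_eq {x y w c : E}
    (h : ∀ z ∈ unitary ℂ, x + z • y + star z • w = c) : y = 0 := by
  have h₁ := h 1 (one_mem _)
  have h₂ := h (-1) (by simp [Unitary.mem_iff])
  have h₃ := h Complex.I (by simp [Unitary.mem_iff])
  have h₄ := h (-Complex.I) (by simp [Unitary.mem_iff])
  -- The Fourier coefficient at frequency one, sampled at the fourth roots of unity.
  have hfourier : (4 : ℂ) • y = 0 := calc
    (4 : ℂ) • y = (x + (1 : ℂ) • y + star (1 : ℂ) • w) - (x + (-1 : ℂ) • y + star (-1 : ℂ) • w) -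
        Complex.I • ((x + Complex.I • y + star Complex.I • w) -
          (x + -Complex.I • y + star (-Complex.I) • w)) := by
      simp only [smul_add, smul_sub, smul_smul, star_one, star_neg, Complex.star_def,
        Complex.conj_I, mul_neg, Complex.I_mul_I]
      module
    _ = 0 := by
      rw [h₁, h₂, h₃, h₄]
      simp only [sub_self, smul_zero]
  simpa using hfourier

theorem map_conj_corner_eq_zero (L : A →ₗ[ℂ] E) {X : A} {c : E}
    (hL : ∀ U ∈ unitary A, L (U * X * star U) = c) {P : A} (hP : IsStarProjection P)
    {U : A} (hU : U ∈ unitary A) : L (U * (P * X * (1 - P)) * star U) = 0 := by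
  refine eq_zero_of_forall_unitary_add_smul_add_star_smul_eq
    (x := L (U * ((1 - P) * X * (1 - P) + P * X * P) * star U))
    (w := L (U * ((1 - P) * X * P) * star U)) (c := c) fun z hz => ?_
  rw [← hL _ (mul_mem hU (one_sub_add_smul_mem_unitary hP hz)), ← map_smul, ← map_smul, ← map_add,
    ← map_add]
  have hexpand : (1 - P + z • P) * X * star (1 - P + z • P) =
      (1 - P) * X * (1 - P) + P * X * P + z • (P * X * (1 - P)) +
        star z • ((1 - P) * X * P) := by
    simp only [star_add, star_smul, hP.isSelfAdjoint.star_eq, hP.one_sub.isSelfAdjoint.star_eq,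
      add_mul, mul_add, smul_mul_assoc, mul_smul_comm, smul_add, smul_smul,
      Unitary.star_mul_self_of_mem hz, one_smul]
    abel
  congr 1
  calc
    _ = U * ((1 - P + z • P) * X * star (1 - P + z • P)) * star U := by
      rw [hexpand]
      simp only [mul_add, add_mul, mul_smul_comm, smul_mul_assoc]
    _ = U * (1 - P + z • P) * X * star (U * (1 - P + z • P)) := by
      simp only [star_mul, mul_assoc]

end StarAlgebra

section UnitaryOrbit

variable {n : Type*} [DecidableEq n]

theorem exists_eq_smul_one_of_diag_eq {R : Type*} [Semiring R] {X : Matrix n n R}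
    (hoff : ∀ i j, i ≠ j → X i j = 0) (hdiag : ∀ i j, X i i = X j j) :
    ∃ c : R, X = c • (1 : Matrix n n R) := by
  rcases isEmpty_or_nonempty n with hn | ⟨⟨k⟩⟩
  · exact ⟨0, Subsingleton.elim _ _⟩
  refine ⟨X k k, ?_⟩
  ext i j
  rcases eq_or_ne i j with rfl | hij
  · simp [hdiag i k]
  · simp [hoff i j hij, hij]

variable [Fintype n]

theorem isStarProjection_single_one {R : Type*} [Semiring R] [StarRing R] (i : n) :
    IsStarProjection (single i i (1 : R)) where
  isIdempotentElem := by simp [IsIdempotentElem]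
  isSelfAdjoint := by simp [IsSelfAdjoint, star_eq_conjTranspose]

theorem map_conj_single_apply_eq_zero {E : Type*} [AddCommGroup E] [Module ℂ E]
    (L : Matrix n n ℂ →ₗ[ℂ] E) {X : Matrix n n ℂ} {c : E}
    (hL : ∀ U ∈ unitaryGroup n ℂ, L (U * X * star U) = c) {i j : n} (hij : i ≠ j)
    {U : Matrix n n ℂ} (hU : U ∈ unitaryGroup n ℂ) :
    L (U * single i j (X i j) * star U) = 0 := by
  have hcut : (1 - single j j 1) * (single i i 1 * X * (1 - single i i 1)) *
      (1 - (1 - single j j 1)) = single i j (X i j) := by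
    simp [sub_mul, mul_sub, ← mul_assoc, single_mul_mul_single, hij, hij.symm]
  rw [← hcut]
  exact map_conj_corner_eq_zero L
    (fun V hV => map_conj_corner_eq_zero L hL (isStarProjection_single_one i) hV)
    (isStarProjection_single_one j).one_sub hU

section RCLike

variable {𝕜 : Type*} [RCLike 𝕜]

theorem exists_mem_unitaryGroup_col_eq {s : Set n} {v : n → EuclideanSpace 𝕜 n}
    (hv : Orthonormal 𝕜 (s.domRestrict v)) :
    ∃ U ∈ unitaryGroup n 𝕜, ∀ k ∈ s, U.col k = v k := by
  obtain ⟨b, hb⟩ := hv.exists_orthonormalBasis_extension_of_card_eq (by simp)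
  refine ⟨(EuclideanSpace.basisFun n 𝕜).toBasis.toMatrix b,
    (EuclideanSpace.basisFun n 𝕜).toMatrix_orthonormalBasis_mem_unitary b, fun k hk => ?_⟩
  ext l
  simp [Module.Basis.toMatrix_apply, hb k hk]

theorem exists_mem_unitaryGroup_col_eq_col_eq {i j : n} (hij : i ≠ j) {u v : EuclideanSpace 𝕜 n}
    (hu : ‖u‖ = 1) (hv : ‖v‖ = 1) (huv : inner 𝕜 u v = 0) :
    ∃ U ∈ unitaryGroup n 𝕜, U.col i = u ∧ U.col j = v := by
  have hvu : inner 𝕜 v u = 0 := inner_eq_zero_symm.mp huv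
  obtain ⟨U, hU, hcol⟩ := exists_mem_unitaryGroup_col_eq (s := {i, j})
    (v := fun k => if k = i then u else v) (by
      rw [orthonormal_iff_ite]
      rintro ⟨k, rfl | rfl⟩ ⟨l, rfl | rfl⟩ <;>
        simp [Subtype.ext_iff, hij, hij.symm, hu, hv, huv, hvu])
  exact ⟨U, hU, by simpa using hcol i (by simp), by simpa [hij.symm] using hcol j (by simp)⟩

theorem star_dotProduct_mulVec_eq_zero_of_forall_unitary {X : Matrix n n 𝕜} {i j : n} (hij : i ≠ j)
    (hX : ∀ U ∈ unitaryGroup n 𝕜, (star U * X * U) i j = 0) {u v : EuclideanSpace 𝕜 n}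
    (huv : inner 𝕜 u v = 0) : star u.ofLp ⬝ᵥ X *ᵥ v.ofLp = 0 := by
  rcases eq_or_ne u 0 with rfl | hu
  · simp
  rcases eq_or_ne v 0 with rfl | hv
  · simp
  obtain ⟨U, hU, hUi, hUj⟩ := exists_mem_unitaryGroup_col_eq_col_eq hij
    (u := (‖u‖⁻¹ : 𝕜) • u) (v := (‖v‖⁻¹ : 𝕜) • v) (norm_smul_inv_norm hu) (norm_smul_inv_norm hv)
    (by simp [inner_smul_left, inner_smul_right, huv])
  have hentry : (star U * X * U) i j = star (U.col i) ⬝ᵥ X *ᵥ U.col j := by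
    rw [mul_assoc]
    rfl
  have h := hX U hU
  rw [hentry, hUi, hUj] at h
  simpa [mulVec_smul, hu, hv] using h

theorem exists_eq_smul_one_of_forall_unitary {X : Matrix n n 𝕜} {i j : n} (hij : i ≠ j)
    (hX : ∀ U ∈ unitaryGroup n 𝕜, (star U * X * U) i j = 0) :
    ∃ c : 𝕜, X = c • (1 : Matrix n n 𝕜) := by
  have horth {u v : n → 𝕜} (huv : v ⬝ᵥ star u = 0) : star u ⬝ᵥ X *ᵥ v = 0 :=
    star_dotProduct_mulVec_eq_zero_of_forall_unitary hij hX (u := .toLp 2 u) (v := .toLp 2 v) huv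
  have hoff (k l : n) (hkl : k ≠ l) : X k l = 0 := by
    simpa [← Pi.single_star, hkl] using
      horth (u := Pi.single k 1) (v := Pi.single l 1) (by simp [hkl])
  refine exists_eq_smul_one_of_diag_eq hoff fun k l => ?_
  rcases eq_or_ne k l with rfl | hkl
  · rfl
  have h := horth (u := Pi.single k 1 + Pi.single l 1) (v := Pi.single k 1 - Pi.single l 1)
    (by simp [hkl, hkl.symm])
  simpa [← Pi.single_star, add_dotProduct, mulVec_sub, hoff k l hkl, hoff l k hkl.symm,
    sub_eq_zero] using h

end RCLike

theorem exists_eq_smul_one_or_of_trace_mul_conj_eq {B X : Matrix n n ℂ} {c : ℂ}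
    (h : ∀ U ∈ unitaryGroup n ℂ, (B * (U * X * star U)).trace = c) :
    (∃ b : ℂ, B = b • (1 : Matrix n n ℂ)) ∨ ∃ x : ℂ, X = x • (1 : Matrix n n ℂ) := by
  rcases subsingleton_or_nontrivial n with hn | hn
  · exact .inl (exists_eq_smul_one_of_diag_eq (fun i j hij => absurd (Subsingleton.elim i j) hij)
      fun i j => by rw [Subsingleton.elim i j])
  obtain ⟨i, j, hij⟩ := exists_pair_ne n
  by_cases hX : ∀ V ∈ unitaryGroup n ℂ, (star V * X * V) i j = 0
  · exact .inr (exists_eq_smul_one_of_forall_unitary hij hX)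
  push Not at hX
  obtain ⟨V, hV, hVX⟩ := hX
  refine .inl (exists_eq_smul_one_of_forall_unitary hij.symm fun U hU => ?_)
  have hconj (W : Matrix n n ℂ) (hW : W ∈ unitaryGroup n ℂ) :
      (B * (W * (star V * X * V) * star W)).trace = c := by
    simpa [mul_assoc] using h (W * star V) (mul_mem hW (Unitary.star_mem hV))
  have hzero : (B * (U * single i j ((star V * X * V) i j) * star U)).trace = 0 :=
    map_conj_single_apply_eq_zero (traceLinearMap n ℂ ℂ ∘ₗ LinearMap.mulLeft ℂ B) hconj hij hU
  have hentry (x : ℂ) :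
      (B * (U * single i j x * star U)).trace = (star U * B * U) j i * x := by
    rw [← mul_assoc, ← mul_assoc, trace_mul_comm, ← mul_assoc, ← mul_assoc, trace_mul_single]
    rfl
  exact (mul_eq_zero.mp ((hentry _).symm.trans hzero)).resolve_right hVX

theorem exists_mem_specialUnitaryGroup_smul {U : Matrix n n ℂ} (hU : U ∈ unitaryGroup n ℂ) :
    ∃ c ∈ unitary ℂ, c • U ∈ specialUnitaryGroup n ℂ := by
  rcases isEmpty_or_nonempty n with hn | hn
  · exact ⟨1, one_mem _, by simp [mem_specialUnitaryGroup_iff, hU]⟩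
  have hdet := det_of_mem_unitary hU
  obtain ⟨c, hc⟩ := IsAlgClosed.exists_pow_nat_eq (star U.det) (Fintype.card_pos (α := n))
  have hc_mem : c ∈ unitary ℂ := by
    have hnorm : ‖c‖ = 1 := by
      rw [← pow_eq_one_iff_of_nonneg (norm_nonneg c) (Fintype.card_ne_zero (α := n)), ← norm_pow,
        hc, norm_star, CStarRing.norm_of_mem_unitary hdet]
    simp [Unitary.mem_iff, Complex.conj_mul', Complex.mul_conj', hnorm]
  refine ⟨c, hc_mem, mem_specialUnitaryGroup_iff.mpr ⟨Unitary.smul_mem_of_mem hc_mem hU, ?_⟩⟩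
  rw [det_smul, hc, Unitary.star_mul_self_of_mem hdet]

theorem exists_mem_specialUnitaryGroup_conj_eq {U : Matrix n n ℂ} (hU : U ∈ unitaryGroup n ℂ) :
    ∃ V ∈ specialUnitaryGroup n ℂ, ∀ X, V * X * star V = U * X * star U := by
  obtain ⟨c, hc, hcU⟩ := exists_mem_specialUnitaryGroup_smul hU
  refine ⟨c • U, hcU, fun X => ?_⟩
  rw [star_smul, smul_mul_assoc, smul_mul_smul_comm, Unitary.mul_star_self_of_mem hc, one_smul]

theorem stmt7_general (a : Matrix n n ℂ)
    (hna : ¬ ((∀ i j, i ≠ j → a i j = 0) ∧ (∀ i j, a i i = a j j))) (X : Matrix n n ℂ)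
    (hX : ¬ ∃ c : ℂ, X = c • (1 : Matrix n n ℂ)) :
    ∃ U : Matrix n n ℂ, U ∈ unitaryGroup n ℂ ∧ U.det = 1 ∧
      (∑ i, ∑ j, a i j * (U * X * star U) i j) ≠ ∑ i, ∑ j, a i j * X i j := by
  by_contra! hconst
  have hpair (M : Matrix n n ℂ) : (aᵀ * M).trace = ∑ i, ∑ j, a i j * M i j := by
    rw [Finset.sum_comm]
    rfl
  have htrace (U : Matrix n n ℂ) (hU : U ∈ unitaryGroup n ℂ) :
      (aᵀ * (U * X * star U)).trace = ∑ i, ∑ j, a i j * X i j := by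
    obtain ⟨V, hV, hVU⟩ := exists_mem_specialUnitaryGroup_conj_eq hU
    rw [← hVU, hpair]
    exact hconst V hV.1 hV.2
  obtain ⟨b, hb⟩ := (exists_eq_smul_one_or_of_trace_mul_conj_eq htrace).resolve_right hX
  have ha : a = b • (1 : Matrix n n ℂ) := by simpa using congrArg transpose hb
  exact hna ⟨fun i j hij => by simp [ha, hij], fun i j => by simp [ha]⟩

end UnitaryOrbit

/-- A linear function `f(M) = Σ aᵢⱼ mᵢⱼ` on `p × p` complex matrices that is not a trace
multiple is not constant on the `SU(p)`-conjugacy class of any non-central `X ∈ SU(p)`. -/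
theorem stmt7 (p : ℕ) (a : Matrix (Fin p) (Fin p) ℂ)
    (hna : ¬ ((∀ i j, i ≠ j → a i j = 0) ∧ (∀ i j, a i i = a j j)))
    (X : Matrix (Fin p) (Fin p) ℂ)
    (hXU : X ∈ Matrix.unitaryGroup (Fin p) ℂ) (hXdet : X.det = 1)
    (hX : ¬ ∃ c : ℂ, X = c • (1 : Matrix (Fin p) (Fin p) ℂ)) :
    ∃ U : Matrix (Fin p) (Fin p) ℂ, U ∈ Matrix.unitaryGroup (Fin p) ℂ ∧ U.det = 1 ∧
      (∑ i, ∑ j, a i j * (U * X * star U) i j) ≠ ∑ i, ∑ j, a i j * X i j :=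
  stmt7_general a hna X hX
end

section
/- Let ρ be a unitary representation of a group G on a finite-dimensional complex vector space V, and let τ_1,…,τ_k be generators of G such that for each i, no two distinct eigenvalues of ρ(τ_i) differ multiplicatively by a root of unity. Then for every nonzero integer m, a subspace W ⊆ V is invariant under all ρ(τ_i^m) if and only if it is invariant under all ρ(τ_i). In particular, ρ is irreducible if and only if its restriction to the subgroup generated by τ_1^m, …, τ_k^m is irreducible. -/
/-!
Let `x` be an endomorphism with all its eigenvalues in `K`. If `f : K[X]` is injective on the
eigenvalues and `f'(x)` is invertible, then `x` is a polynomial in `f(x)`: Lagrange interpolation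
gives a polynomial `y` in `f(x)` such that `y - x` is nilpotent, and Newton's method starting at `y`
solves `f(r) = f(x)` inside `K[f(x)]`. A root at nilpotent distance from `y` is unique, so `r = x`.
For `f = X ^ n` this shows that `x` and `x ^ n` have the same invariant subspaces, whether or not
`x` is diagonalizable.
-/

open Polynomial

theorem mem_of_aeval_mem_of_isNilpotent_sub {R S : Type*} [CommRing R] [CommRing S] [Algebra R S]
    {A : Subalgebra R S} [Algebra.IsIntegral A S] {f : R[X]} {x y : S} (hy : y ∈ A)
    (hyx : IsNilpotent (y - x)) (hf : aeval x f ∈ A) (hf' : IsUnit (aeval x (derivative f))) :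
    x ∈ A := by
  lift y to A using hy
  let P : A[X] := f.map (algebraMap R A) - C ⟨aeval x f, hf⟩
  have aeval_P (z : S) : aeval z P = aeval z f - aeval x f := by
    simp [P, aeval_map_algebraMap]
  have aeval_P' (z : S) : aeval z (derivative P) = aeval z (derivative f) := by
    simp [P, derivative_map, aeval_map_algebraMap]
  have coe_aeval (Q : A[X]) (z : A) : algebraMap A S (aeval z Q) = aeval (z : S) Q :=
    (aeval_algebraMap_apply S z Q).symm
  have nilpotent_S : IsNilpotent (aeval (y : S) P) := by
    rw [aeval_P]
    exact isNilpotent_aeval_sub_of_isNilpotent_sub f hyx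
  have unit_S : IsUnit (aeval (y : S) (derivative P)) := by
    rw [aeval_P']
    exact isUnit_aeval_of_isUnit_aeval_of_isNilpotent_sub hf' hyx
  have nilpotent_A : IsNilpotent (aeval y P) := by
    rwa [← IsNilpotent.map_iff (f := algebraMap A S) Subtype.val_injective, coe_aeval]
  have unit_A : IsUnit (aeval y (derivative P)) :=
    isUnit_of_map_unit (algebraMap A S) _ (by rwa [coe_aeval])
  obtain ⟨r, ⟨hyr, hr⟩, -⟩ := existsUnique_nilpotent_sub_and_aeval_eq_zero nilpotent_A unit_A
  have hr_S : IsNilpotent ((y : S) - r) ∧ aeval (r : S) P = 0 :=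
    ⟨hyr.map (algebraMap A S), by rw [← coe_aeval, hr, map_zero]⟩
  have hx_S : IsNilpotent ((y : S) - x) ∧ aeval x P = 0 := ⟨hyx, by rw [aeval_P, sub_self]⟩
  have x_eq : x = r :=
    (existsUnique_nilpotent_sub_and_aeval_eq_zero nilpotent_S unit_S).unique hx_S hr_S
  exact x_eq ▸ r.2

section PolynomialGenerator

variable {K : Type*} [Field K] {p f : K[X]}

theorem exists_dvd_X_sub_comp_pow (hp : p ≠ 0) (hsplits : p.Splits)
    (hinj : Set.InjOn f.eval {a | p.IsRoot a}) :
    ∃ (q : K[X]) (k : ℕ), p ∣ (X - q.comp f) ^ k := by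
  classical
  let q := Lagrange.interpolate p.roots.toFinset f.eval id
  have X_sub_C_dvd : ∀ a ∈ p.roots, X - C a ∣ X - q.comp f := by
    intro a ha
    have eval_q : q.eval (f.eval a) = a :=
      Lagrange.eval_interpolate_at_node id (by simpa [hp, Set.InjOn] using hinj)
        (Multiset.mem_toFinset.mpr ha)
    rw [dvd_iff_isRoot, IsRoot, eval_sub, eval_X, eval_comp, eval_q, sub_self]
  have prod_dvd := Multiset.prod_dvd_prod_of_dvd _ (fun _ => X - q.comp f) X_sub_C_dvd
  rw [Multiset.map_const', Multiset.prod_replicate] at prod_dvd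
  refine ⟨q, p.roots.card, ?_⟩
  nth_rw 1 [hsplits.eq_prod_roots]
  exact (C_mul_dvd (leadingCoeff_ne_zero.mpr hp)).mpr prod_dvd

theorem exists_dvd_X_sub_comp (hp : p ≠ 0) (hsplits : p.Splits)
    (hinj : Set.InjOn f.eval {a | p.IsRoot a}) (hf' : IsCoprime p (derivative f)) :
    ∃ q : K[X], p ∣ X - q.comp f := by
  let x := AdjoinRoot.root p
  have : Module.Finite K (AdjoinRoot p) := (AdjoinRoot.powerBasis hp).finite
  let A := Algebra.adjoin K {aeval x f}
  have : Algebra.IsIntegral A (AdjoinRoot p) := Algebra.IsIntegral.tower_top K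
  obtain ⟨q, k, hq⟩ := exists_dvd_X_sub_comp_pow hp hsplits hinj
  have q_mem : aeval (aeval x f) q ∈ A := aeval_mem_adjoin_singleton K _
  have nilpotent : IsNilpotent (aeval (aeval x f) q - x) := by
    rw [← neg_sub, isNilpotent_neg_iff]
    rw [← AdjoinRoot.mk_eq_zero, map_pow, map_sub, AdjoinRoot.mk_X, ← AdjoinRoot.aeval_eq,
      aeval_comp] at hq
    exact ⟨k, hq⟩
  have unit : IsUnit (aeval x (derivative f)) := by
    rw [← isCoprime_zero_left]
    simpa [x, AdjoinRoot.aeval_eq] using hf'.map (AdjoinRoot.mk p)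
  have x_mem : x ∈ A :=
    mem_of_aeval_mem_of_isNilpotent_sub q_mem nilpotent (Algebra.self_mem_adjoin_singleton K _) unit
  obtain ⟨r, hr⟩ := (Algebra.adjoin_singleton_eq_range_aeval K (aeval x f)).le x_mem
  refine ⟨r, AdjoinRoot.mk_eq_zero.mp ?_⟩
  rw [map_sub, AdjoinRoot.mk_X, sub_eq_zero, ← AdjoinRoot.aeval_eq, aeval_comp]
  exact hr.symm

end PolynomialGenerator

section InvariantSubmodule

variable {K V : Type*} [Field K] [AddCommGroup V] [Module K V] [FiniteDimensional K V]
  {x : Module.End K V}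

theorem invtSubmodule_aeval_le_invtSubmodule {f : K[X]} (hsplits : (minpoly K x).Splits)
    (hinj : Set.InjOn f.eval {a | x.HasEigenvalue a})
    (hf' : IsCoprime (minpoly K x) (derivative f)) :
    (aeval x f).invtSubmodule ≤ x.invtSubmodule := by
  simp only [Module.End.hasEigenvalue_iff_isRoot] at hinj
  obtain ⟨q, hq⟩ := exists_dvd_X_sub_comp
    (minpoly.ne_zero (Algebra.IsIntegral.isIntegral x)) hsplits hinj hf'
  have x_eq : aeval (aeval x f) q = x := by
    rw [minpoly.dvd_iff, map_sub, aeval_X, aeval_comp, sub_eq_zero] at hq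
    exact hq.symm
  intro W hW w hw
  have q_apply_mem := aeval_apply_smul_mem_of_le_comap hw q _ hW
  rwa [x_eq] at q_apply_mem

theorem isCoprime_minpoly_X (hx : IsUnit x) : IsCoprime (minpoly K x) X := by
  rw [isCoprime_comm, irreducible_X.coprime_iff_not_dvd, X_dvd_iff, coeff_zero_eq_eval_zero]
  intro h
  obtain ⟨v, hv⟩ := (Module.End.hasEigenvalue_of_isRoot h).exists_hasEigenvector
  have inj : Function.Injective x := ((Module.End.isUnit_iff x).mp hx).1
  exact hv.2 (inj (by simpa using hv.apply_eq_smul))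

theorem invtSubmodule_pow_le_invtSubmodule (hx : IsUnit x) (hsplits : (minpoly K x).Splits)
    {n : ℕ} (hn : (n : K) ≠ 0) (hinj : Set.InjOn (· ^ n) {a | x.HasEigenvalue a}) :
    (x ^ n).invtSubmodule ≤ x.invtSubmodule := by
  have coprime : IsCoprime (minpoly K x) (derivative (X ^ n)) := by
    rw [derivative_X_pow, isCoprime_mul_unit_left_right (isUnit_C.mpr hn.isUnit)]
    exact (isCoprime_minpoly_X hx).pow_right
  have eval_injOn : Set.InjOn (X ^ n : K[X]).eval {a | x.HasEigenvalue a} := by simpa using hinj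
  simpa using invtSubmodule_aeval_le_invtSubmodule hsplits eval_injOn coprime

end InvariantSubmodule

theorem injOn_zpow_of_div_pow_ne_one {M : Type*} [CommGroupWithZero M] {s : Set M}
    (hs : ∀ a b, a ∈ s → b ∈ s → a ≠ b → ∀ r : ℕ, 0 < r → (a / b) ^ r ≠ 1) {m : ℤ} (hm : m ≠ 0) :
    Set.InjOn (· ^ m) s := by
  intro a ha b hb (hab : a ^ m = b ^ m)
  by_contra hne
  have b_ne_zero : b ≠ 0 := by
    rintro rfl
    rw [zero_zpow m hm] at hab
    exact hne ((zpow_eq_zero_iff hm).mp hab)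
  have div_zpow_eq : (a / b) ^ m = 1 := by
    rw [div_zpow, hab, div_self (zpow_ne_zero m b_ne_zero)]
  refine hs a b ha hb hne m.natAbs (Int.natAbs_pos.mpr hm) ?_
  obtain ⟨n, rfl | rfl⟩ := m.eq_nat_or_neg <;> simpa using div_zpow_eq

/-- The linear representation underlying a representation by linear isometries, such as a unitary
representation. -/
def isometricRepresentation {K G V : Type*} [CommSemiring K] [Monoid G]
    [SeminormedAddCommGroup V] [Module K V] (ρ : G →* (V ≃ₗᵢ[K] V)) : Representation K G V where
  toFun g := (ρ g).toLinearEquiv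
  map_one' := by rw [map_one]; rfl
  map_mul' g h := by rw [map_mul]; rfl

section Representation

variable {K G V : Type*} [Field K] [Group G] [AddCommGroup V] [Module K V] [FiniteDimensional K V]

/-- The subgroup of those `g` for which the subspace `W` is `ρ g`-invariant. Finite-dimensionality
makes the one-sided condition `ρ g W ⊆ W` stable under inversion. -/
def invariantSubgroup (ρ : Representation K G V) (W : Submodule K V) : Subgroup G where
  carrier := {g | ∀ w ∈ W, ρ g w ∈ W}
  one_mem' := by simp
  mul_mem' {g h} hg hh w hw := by simpa using hg _ (hh w hw)
  inv_mem' {g} hg w hw := by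
    have map_eq : W.map (ρ g) = W :=
      Submodule.eq_of_le_of_finrank_eq (Submodule.map_le_iff_le_comap.mpr hg)
        (Submodule.equivMapOfInjective _ (ρ.apply_bijective g).1 W).finrank_eq.symm
    obtain ⟨v, hv, rfl⟩ := map_eq ▸ hw
    simpa using hv

theorem zpow_mem_invariantSubgroup_iff {ρ : Representation K G V} {W : Submodule K V} {g : G}
    (hsplits : (minpoly K (ρ g)).Splits) {m : ℤ} (hm : (m : K) ≠ 0)
    (hinj : Set.InjOn (· ^ m) {a | Module.End.HasEigenvalue (ρ g) a}) :
    g ^ m ∈ invariantSubgroup ρ W ↔ g ∈ invariantSubgroup ρ W := by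
  refine ⟨fun hg => ?_, fun hg => zpow_mem hg m⟩
  obtain ⟨n, hmn⟩ := m.eq_nat_or_neg
  have hn : (n : K) ≠ 0 := by rcases hmn with rfl | rfl <;> simpa using hm
  have pow_injOn : Set.InjOn (· ^ n) {a | Module.End.HasEigenvalue (ρ g) a} := by
    rcases hmn with rfl | rfl <;> simpa [Set.InjOn] using hinj
  have pow_mem : g ^ n ∈ invariantSubgroup ρ W := by rcases hmn with rfl | rfl <;> simpa using hg
  have isUnit_g : IsUnit (ρ g) := (Group.isUnit g).map ρ
  refine invtSubmodule_pow_le_invtSubmodule isUnit_g hsplits hn pow_injOn ?_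
  rw [← map_pow]
  exact pow_mem

theorem stmt10_general {ι : Type*} (ρ : Representation K G V) (τ : ι → G)
    (hgen : Subgroup.closure (Set.range τ) = ⊤) (hsplits : ∀ i, (minpoly K (ρ (τ i))).Splits)
    {m : ℤ} (hm : (m : K) ≠ 0)
    (hinj : ∀ i, Set.InjOn (· ^ m) {a | Module.End.HasEigenvalue (ρ (τ i)) a}) :
    (∀ W : Submodule K V,
      (∀ i, ∀ w ∈ W, ρ (τ i ^ m) w ∈ W) ↔ (∀ i, ∀ w ∈ W, ρ (τ i) w ∈ W)) ∧
    ((∀ W : Submodule K V, (∀ g : G, ∀ w ∈ W, ρ g w ∈ W) → W = ⊥ ∨ W = ⊤) ↔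
      (∀ W : Submodule K V,
        (∀ g ∈ Subgroup.closure (Set.range fun i => τ i ^ m), ∀ w ∈ W, ρ g w ∈ W) →
          W = ⊥ ∨ W = ⊤)) := by
  have zpow_mem_iff (W : Submodule K V) (i : ι) :
      τ i ^ m ∈ invariantSubgroup ρ W ↔ τ i ∈ invariantSubgroup ρ W :=
    zpow_mem_invariantSubgroup_iff (hsplits i) hm (hinj i)
  refine ⟨fun W => forall_congr' (zpow_mem_iff W), fun irred W hW => irred W fun g => ?_,
    fun irred W hW => irred W fun g _ => hW g⟩
  have closure_le : Subgroup.closure (Set.range τ) ≤ invariantSubgroup ρ W := by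
    rw [Subgroup.closure_le, Set.range_subset_iff]
    exact fun i => (zpow_mem_iff W i).mp (hW _ (Subgroup.subset_closure (Set.mem_range_self i)))
  exact closure_le (hgen ▸ Subgroup.mem_top g)

end Representation

/-- If `τ₁, …, τ_k` generate `G` and, for a unitary representation `ρ`, no two distinct
eigenvalues of any `ρ(τᵢ)` differ multiplicatively by a root of unity, then for any
integer `m ≠ 0` a subspace is invariant under all `ρ(τᵢᵐ)` iff it is invariant under all
`ρ(τᵢ)`; in particular `ρ` is irreducible iff its restriction to `⟨τ₁ᵐ, …, τ_kᵐ⟩` is. -/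
theorem stmt10 {G : Type*} [Group G] {V : Type*} [NormedAddCommGroup V]
    [InnerProductSpace ℂ V] [FiniteDimensional ℂ V] {k : ℕ}
    (ρ : G →* (V ≃ₗᵢ[ℂ] V)) (τ : Fin k → G)
    (hgen : Subgroup.closure (Set.range τ) = ⊤)
    (heig : ∀ (i : Fin k) (lam mu : ℂ),
      Module.End.HasEigenvalue ((ρ (τ i)).toLinearEquiv : V →ₗ[ℂ] V) lam →
      Module.End.HasEigenvalue ((ρ (τ i)).toLinearEquiv : V →ₗ[ℂ] V) mu →
      lam ≠ mu → ∀ r : ℕ, 0 < r → (lam / mu) ^ r ≠ 1)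
    (m : ℤ) (hm : m ≠ 0) :
    (∀ W : Submodule ℂ V,
      (∀ i : Fin k, ∀ w ∈ W, ρ (τ i ^ m) w ∈ W) ↔ (∀ i : Fin k, ∀ w ∈ W, ρ (τ i) w ∈ W)) ∧
    ((∀ W : Submodule ℂ V, (∀ g : G, ∀ w ∈ W, ρ g w ∈ W) → W = ⊥ ∨ W = ⊤) ↔
      (∀ W : Submodule ℂ V,
        (∀ g ∈ Subgroup.closure (Set.range fun i => τ i ^ m), ∀ w ∈ W, ρ g w ∈ W) →
          W = ⊥ ∨ W = ⊤)) := by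
  exact stmt10_general (isometricRepresentation ρ) τ hgen (fun _ => IsAlgClosed.splits _)
    (Int.cast_ne_zero.mpr hm) fun i => injOn_zpow_of_div_pow_ne_one (heig i) hm
end
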